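/- Let η > 0 and t > 0, and let K_η(t,·) be the OST kernel. Then there exists a constant C_η > 0 depending only on η such that for all x ∈ ℝ, |∂_x K_η(t,x)| ≤ C_η (e^{6ηt}/t^{2/3}) · 1/(1+|x|³). -/

import Mathlib

open MeasureTheory

noncomputable def ostSymbol (η t ξ : ℝ) : ℂ :=
  Complex.exp (Complex.I * ((ξ ^ 3 * t : ℝ) : ℂ) - ((η * t * (|ξ| ^ 3 - |ξ|) : ℝ) : ℂ))

noncomputable def ostKernel (η t x : ℝ) : ℂ :=
  ∫ ξ : ℝ, Complex.exp (2 * Real.pi * Complex.I * ((x * ξ : ℝ) : ℂ)) * ostSymbol η t ξ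

/-!
Since the symbol is Hermitian, `∂ₓK(t, x) = -4π Im J` with `J = ∫₀^∞ ξ e^{tP(ξ) + iωξ} dξ`,
`ω = 2πx` and `P(ξ) = (i - η)ξ³ + ηξ`. Writing `T q = q' + t P' q`, integration by parts reads
`iω ∫₀^∞ q e^{tP + iωξ} = -q(0) - ∫₀^∞ (T q) e^{tP + iωξ}`, so three steps starting from `q = ξ`
give `ω³J + ω = -i (2ηt + ∫₀^∞ (T³ξ) e^{tP + iωξ})`, and the real term `ω` does not affect `Im J`.

The right-hand side has the size of `J` itself: `T` preserves the span of the amplitudes `t^m ξ^k`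
with `k ≤ 3m + 1`, and by scaling `t^m ∫₀^∞ ξ^k e^{-btξ³} dξ` is a multiple of `t^(m - (k + 1)/3)`,
whose exponent is at least `-2/3`; excess positive powers of `t` are absorbed by an exponential.
-/

open Set Filter Topology Polynomial FourierTransform ComplexConjugate

section Hermitian

variable {f : ℝ → ℂ}

lemma integrable_of_apply_neg_eq_conj (hf : IntegrableOn f (Ioi 0))
    (hconj : ∀ ξ, f (-ξ) = conj (f ξ)) : Integrable f := by
  have hneg : IntegrableOn (fun ξ => conj (f (-ξ))) (Iic 0) := by
    have hpre : (Neg.neg : ℝ → ℝ) ⁻¹' Ici 0 = Iic 0 := by simp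
    rw [← hpre]
    exact Complex.conjCLE.toContinuousLinearMap.integrable_comp <|
      ((Measure.measurePreserving_neg volume).integrableOn_comp_preimage
        (MeasurableEquiv.neg ℝ).measurableEmbedding).2
        ((integrableOn_Ici_iff_integrableOn_Ioi).2 hf)
  rw [← integrableOn_univ, ← Iic_union_Ioi (a := (0 : ℝ))]
  exact (hneg.congr_fun (fun ξ _ => by simp [hconj]) measurableSet_Iic).union hf

lemma integral_eq_two_mul_re_of_apply_neg_eq_conj (hf : IntegrableOn f (Ioi 0))
    (hconj : ∀ ξ, f (-ξ) = conj (f ξ)) : ∫ ξ, f ξ = ((2 * (∫ ξ in Ioi 0, f ξ).re : ℝ) : ℂ) := by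
  have hneg : ∫ ξ in Iic (0 : ℝ), f ξ = conj (∫ ξ in Ioi (0 : ℝ), f ξ) := by
    rw [← integral_conj, ← neg_zero, ← integral_comp_neg_Ioi, neg_zero]
    simp only [hconj]
  have hint := integrable_of_apply_neg_eq_conj hf hconj
  rw [← intervalIntegral.integral_Iic_add_Ioi hint.integrableOn hint.integrableOn, hneg, add_comm,
    Complex.add_conj]

lemma hasDerivAt_fourierInv {E : Type*} [NormedAddCommGroup E] [NormedSpace ℂ E] {f : ℝ → E}
    (hf : Integrable f) (hf' : Integrable fun ξ : ℝ => ξ • f ξ) (x : ℝ) :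
    HasDerivAt (𝓕⁻ f) (𝓕⁻ (fun ξ : ℝ => (2 * Real.pi * Complex.I * ξ) • f ξ) x) x := by
  have h := (Real.hasDerivAt_fourier hf hf' (-x)).scomp x (hasDerivAt_neg x)
  rw [show 𝓕⁻ f = 𝓕 f ∘ Neg.neg from funext (Real.fourierInv_eq_fourier_neg f)]
  refine h.congr_deriv ?_
  simp only [Real.fourierInv_eq_fourier_neg, Real.fourier_eq, neg_smul, one_smul, ← integral_neg]
  simp

lemma fourierInv_eq_two_mul_re_of_apply_neg_eq_conj (hf : IntegrableOn f (Ioi 0))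
    (hconj : ∀ ξ, f (-ξ) = conj (f ξ)) (x : ℝ) :
    𝓕⁻ f x = ((2 * (∫ ξ in Ioi (0 : ℝ),
      Complex.exp ((2 * Real.pi * x * ξ : ℝ) * Complex.I) * f ξ).re : ℝ) : ℂ) := by
  have hint : IntegrableOn
      (fun ξ : ℝ => Complex.exp ((2 * Real.pi * x * ξ : ℝ) * Complex.I) * f ξ) (Ioi 0) :=
    hf.bdd_mul (c := 1) (Continuous.aestronglyMeasurable (by fun_prop))
      (ae_of_all _ fun ξ => (Complex.norm_exp_ofReal_mul_I _).le)
  rw [← integral_eq_two_mul_re_of_apply_neg_eq_conj hint, Real.fourierInv_eq']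
  · congr! 3 with ξ
    simp only [RCLike.inner_apply, Real.ringHom_apply]
    push_cast
    ring_nf
  · intro ξ
    rw [hconj, map_mul, ← Complex.exp_conj, map_mul, Complex.conj_I, Complex.conj_ofReal]
    push_cast
    ring_nf

lemma hasDerivAt_fourierInv_of_apply_neg_eq_conj (hf : IntegrableOn f (Ioi 0))
    (hf' : IntegrableOn (fun ξ : ℝ => ξ * f ξ) (Ioi 0)) (hconj : ∀ ξ, f (-ξ) = conj (f ξ)) (x : ℝ) :
    HasDerivAt (𝓕⁻ f) ((-(4 * Real.pi) * (∫ ξ in Ioi (0 : ℝ),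
      ξ * (Complex.exp ((2 * Real.pi * x * ξ : ℝ) * Complex.I) * f ξ)).im : ℝ) : ℂ) x := by
  have h2pi : (2 * Real.pi * Complex.I : ℂ) ≠ 0 := Complex.two_pi_I_ne_zero
  set g : ℝ → ℂ := fun ξ => (2 * Real.pi * Complex.I * ξ) • f ξ with hg
  have hgconj (ξ : ℝ) : g (-ξ) = conj (g ξ) := by
    simp [hg, hconj, Complex.conj_ofNat]
  have hgint : IntegrableOn g (Ioi 0) := by
    simpa only [hg, smul_eq_mul, mul_assoc] using! hf'.const_mul (2 * Real.pi * Complex.I)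
  have hint' : Integrable fun ξ : ℝ => ξ • f ξ := by
    convert (integrable_of_apply_neg_eq_conj hgint hgconj).const_mul (2 * Real.pi * Complex.I)⁻¹
      using 2 with ξ
    simp only [hg, smul_eq_mul, Complex.real_smul]
    rw [mul_assoc (2 * Real.pi * Complex.I : ℂ), inv_mul_cancel_left₀ h2pi]
  refine (hasDerivAt_fourierInv (integrable_of_apply_neg_eq_conj hf hconj) hint' x).congr_deriv ?_
  rw [fourierInv_eq_two_mul_re_of_apply_neg_eq_conj hgint hgconj]
  have hfactor :
      ∫ ξ in Ioi (0 : ℝ), Complex.exp ((2 * Real.pi * x * ξ : ℝ) * Complex.I) * g ξ =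
      2 * Real.pi * Complex.I * ∫ ξ in Ioi (0 : ℝ),
        ξ * (Complex.exp ((2 * Real.pi * x * ξ : ℝ) * Complex.I) * f ξ) := by
    rw [← integral_const_mul]
    congr 1 with ξ
    simp only [hg, smul_eq_mul]
    ring
  have hre (z : ℂ) : (2 * Real.pi * Complex.I * z).re = -(2 * Real.pi * z.im) := by simp
  rw [hfactor, hre]
  congr 1
  ring

end Hermitian

section RpowExp

lemma rpow_le_rpow_mul_exp {p ε t : ℝ} (hp : 0 ≤ p) (hε : 0 < ε) (ht : 0 ≤ t) :
    t ^ p ≤ (p / ε) ^ p * Real.exp (ε * t) := by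
  rcases hp.eq_or_lt with rfl | hp
  · simpa using mul_nonneg hε.le ht
  calc t ^ p = (p / ε) ^ p * (ε * t / p) ^ p := by
        rw [← Real.mul_rpow (by positivity) (by positivity)]
        field_simp
    _ ≤ (p / ε) ^ p * Real.exp (ε * t / p) ^ p := by
        gcongr
        linarith [Real.add_one_le_exp (ε * t / p)]
    _ = (p / ε) ^ p * Real.exp (ε * t) := by
        rw [← Real.exp_mul, div_mul_cancel₀ _ hp.ne']

lemma exists_rpow_le_mul_exp_div_rpow {ε r s : ℝ} (hε : 0 < ε) (hrs : -s ≤ r) :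
    ∃ C, ∀ t : ℝ, 0 < t → t ^ r ≤ C * (Real.exp (ε * t) / t ^ s) := by
  refine ⟨((r + s) / ε) ^ (r + s), fun t ht => ?_⟩
  rw [← mul_div_assoc, le_div_iff₀ (by positivity), ← Real.rpow_add ht]
  exact rpow_le_rpow_mul_exp (by linarith) hε ht.le

end RpowExp

section TwistedDeriv

variable {R : Type*} [CommSemiring R]

/-- The derivation `q ↦ q' + Φ' q`, i.e. the operator `e^{-Φ} ∘ d/dX ∘ e^Φ` on amplitudes `q`:
the derivative of `q e^Φ` is `(twistedDeriv Φ q) e^Φ`. -/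
noncomputable def twistedDeriv (Φ : R[X]) : R[X] →ₗ[R] R[X] :=
  derivative + LinearMap.mulLeft R (derivative Φ)

lemma twistedDeriv_apply (Φ q : R[X]) :
    twistedDeriv Φ q = derivative q + derivative Φ * q := rfl

lemma twistedDeriv_add_C_mul_X (Φ q : R[X]) (c : R) :
    twistedDeriv (Φ + C c * X) q = twistedDeriv Φ q + c • q := by
  simp only [twistedDeriv_apply, derivative_add, derivative_C_mul_X, smul_eq_C_mul]
  ring

lemma hasDerivAt_eval_mul_cexp_eval (Φ q : ℂ[X]) (ξ : ℝ) :
    HasDerivAt (fun ξ : ℝ => q.eval (ξ : ℂ) * Complex.exp (Φ.eval (ξ : ℂ)))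
      ((twistedDeriv Φ q).eval (ξ : ℂ) * Complex.exp (Φ.eval (ξ : ℂ))) ξ := by
  refine ((q.hasDerivAt _).mul (Φ.hasDerivAt _).cexp).comp_ofReal.congr_deriv ?_
  simp only [twistedDeriv_apply, eval_add, eval_mul]
  ring

end TwistedDeriv

/-- The half-line integral `∫₀^∞ q(ξ) e^{Φ(ξ)} dξ` with phase `Φ` and amplitude `q`. -/
noncomputable def expIntegral (Φ q : ℂ[X]) : ℂ :=
  ∫ ξ in Ioi (0 : ℝ), q.eval (ξ : ℂ) * Complex.exp (Φ.eval (ξ : ℂ))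

/-- The phase `tP(ξ) + iωξ` at time `t` and frequency `ω`. -/
noncomputable def oscillatingPhase (P : ℂ[X]) (t ω : ℝ) : ℂ[X] :=
  (t : ℂ) • P + C (Complex.I * ω) * X

/-- The phase `Φ` satisfies `Re Φ(ξ) ≤ a - b ξ^d` on the positive half-line, with `d, b > 0`, so
that `e^Φ` decays there faster than any polynomial grows. -/
structure DecayBound (Φ : ℂ[X]) (d : ℕ) (a b : ℝ) : Prop where
  degree_pos : 0 < d
  rate_pos : 0 < b
  re_eval_le : ∀ ξ : ℝ, 0 ≤ ξ → (Φ.eval (ξ : ℂ)).re ≤ a - b * ξ ^ d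

namespace DecayBound

variable {Φ : ℂ[X]} {d : ℕ} {a b : ℝ}

lemma norm_pow_mul_cexp_eval_le (hΦ : DecayBound Φ d a b) (k : ℕ) {ξ : ℝ} (hξ : 0 < ξ) :
    ‖(ξ : ℂ) ^ k * Complex.exp (Φ.eval (ξ : ℂ))‖ ≤
      Real.exp a * (ξ ^ (k : ℝ) * Real.exp (-b * ξ ^ (d : ℝ))) := by
  rw [norm_mul, norm_pow, Complex.norm_real, Real.norm_of_nonneg hξ.le, Complex.norm_exp,
    Real.rpow_natCast, Real.rpow_natCast, mul_left_comm, ← Real.exp_add]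
  gcongr
  linarith [hΦ.re_eval_le ξ hξ.le]

lemma integrableOn_rpow_mul_exp (hΦ : DecayBound Φ d a b) (k : ℕ) :
    IntegrableOn (fun ξ : ℝ => Real.exp a * (ξ ^ (k : ℝ) * Real.exp (-b * ξ ^ (d : ℝ)))) (Ioi 0) :=
  (integrableOn_rpow_mul_exp_neg_mul_rpow (by linarith [k.cast_nonneg (α := ℝ)])
    (Nat.cast_pos.2 hΦ.degree_pos) hΦ.rate_pos).const_mul _

lemma integrableOn (hΦ : DecayBound Φ d a b) (q : ℂ[X]) :
    IntegrableOn (fun ξ : ℝ => q.eval (ξ : ℂ) * Complex.exp (Φ.eval (ξ : ℂ))) (Ioi 0) := by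
  induction q using Polynomial.induction_on' with
  | add p q hp hq =>
    simp only [eval_add, add_mul]
    exact hp.add hq
  | monomial k c =>
    simp only [eval_monomial, mul_assoc]
    refine Integrable.const_mul ((hΦ.integrableOn_rpow_mul_exp k).mono' ?_ ?_) c
    · exact Continuous.aestronglyMeasurable (by fun_prop)
    · filter_upwards [ae_restrict_mem measurableSet_Ioi] with ξ hξ
      exact hΦ.norm_pow_mul_cexp_eval_le k hξ

lemma norm_expIntegral_X_pow_le (hΦ : DecayBound Φ d a b) (k : ℕ) :
    ‖expIntegral Φ (X ^ k)‖ ≤ Real.exp a *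
      (b ^ (-((k : ℝ) + 1) / d) * (1 / d) * Real.Gamma (((k : ℝ) + 1) / d)) := by
  rw [← integral_rpow_mul_exp_neg_mul_rpow (Nat.cast_pos.2 hΦ.degree_pos)
    (by linarith [k.cast_nonneg (α := ℝ)]) hΦ.rate_pos, ← integral_const_mul]
  refine norm_integral_le_of_norm_le (hΦ.integrableOn_rpow_mul_exp k) ?_
  filter_upwards [ae_restrict_mem measurableSet_Ioi] with ξ hξ
  simpa only [eval_pow, eval_X] using hΦ.norm_pow_mul_cexp_eval_le k hξ

lemma expIntegral_add (hΦ : DecayBound Φ d a b) (p q : ℂ[X]) :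
    expIntegral Φ (p + q) = expIntegral Φ p + expIntegral Φ q := by
  simp only [expIntegral, eval_add, add_mul]
  exact integral_add (hΦ.integrableOn p) (hΦ.integrableOn q)

lemma expIntegral_twistedDeriv (hΦ : DecayBound Φ d a b) (q : ℂ[X]) :
    expIntegral Φ (twistedDeriv Φ q) = -(q.eval 0 * Complex.exp (Φ.eval 0)) := by
  have hderiv := hasDerivAt_eval_mul_cexp_eval Φ q
  have hint := hΦ.integrableOn (twistedDeriv Φ q)
  have hlim := tendsto_zero_of_hasDerivAt_of_integrableOn_Ioi (fun ξ _ => hderiv ξ) hint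
    (hΦ.integrableOn q)
  simpa [expIntegral] using
    integral_Ioi_of_hasDerivAt_of_tendsto' (a := 0) (fun ξ _ => hderiv ξ) hint hlim

end DecayBound

lemma expIntegral_smul (Φ q : ℂ[X]) (c : ℂ) : expIntegral Φ (c • q) = c * expIntegral Φ q := by
  simp only [expIntegral, eval_smul, smul_eq_mul, mul_assoc, integral_const_mul]

namespace DecayBound

variable {Φ : ℂ[X]} {d : ℕ} {a b : ℝ} {c : ℂ}

lemma mul_expIntegral_add_C_mul_X (hΦ : DecayBound (Φ + C c * X) d a b) (q : ℂ[X]) :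
    c * expIntegral (Φ + C c * X) q =
      -(q.eval 0 * Complex.exp (Φ.eval 0) +
        expIntegral (Φ + C c * X) (twistedDeriv Φ q)) := by
  have h := hΦ.expIntegral_twistedDeriv q
  rw [twistedDeriv_add_C_mul_X, hΦ.expIntegral_add, expIntegral_smul] at h
  simp only [eval_add, eval_mul, eval_X, mul_zero, add_zero] at h
  linear_combination h

lemma cube_mul_expIntegral_X (hΦ : DecayBound (Φ + C c * X) d a b) (hΦ0 : Φ.eval 0 = 0) :
    c ^ 3 * expIntegral (Φ + C c * X) X - c =
      -(2 * (derivative Φ).eval 0 +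
        expIntegral (Φ + C c * X) ((twistedDeriv Φ)^[3] X)) := by
  have h₀ := hΦ.mul_expIntegral_add_C_mul_X X
  have h₁ := hΦ.mul_expIntegral_add_C_mul_X (twistedDeriv Φ X)
  have h₂ := hΦ.mul_expIntegral_add_C_mul_X (twistedDeriv Φ (twistedDeriv Φ X))
  have e₁ : (twistedDeriv Φ X).eval 0 = 1 := by simp [twistedDeriv_apply]
  have e₂ : (twistedDeriv Φ (twistedDeriv Φ X)).eval 0 = 2 * (derivative Φ).eval 0 := by
    simp [twistedDeriv_apply, two_mul]
  rw [hΦ0, Complex.exp_zero, mul_one] at h₀ h₁ h₂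
  rw [eval_X] at h₀
  rw [e₁] at h₁
  rw [e₂] at h₂
  simp only [Function.iterate_succ, Function.iterate_zero, Function.comp_apply, id_eq]
  linear_combination c ^ 2 * h₀ - c * h₁ + h₂

end DecayBound

lemma decayBound_oscillatingPhase {P : ℂ[X]} {d : ℕ} {a b : ℝ} (hP : DecayBound P d a b) {t : ℝ}
    (ht : 0 < t) (ω : ℝ) :
    DecayBound (oscillatingPhase P t ω) d (a * t) (b * t) where
  degree_pos := hP.degree_pos
  rate_pos := mul_pos hP.rate_pos ht
  re_eval_le ξ hξ := by
    have hre : ((oscillatingPhase P t ω).eval (ξ : ℂ)).re = t * (P.eval (ξ : ℂ)).re := by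
      simp [oscillatingPhase]
    rw [hre]
    linarith [mul_le_mul_of_nonneg_left (hP.re_eval_le ξ hξ) ht.le]

/-- The one-parameter families `t ↦ q_t` of amplitudes spanned by `t^m X^k` with `k ≤ d m + w`.
With `ξ` of the order of `t^(-1/d)`, these are the monomials that are `O(t^(-w/d))` as `t → 0`. -/
noncomputable def amplitudeFamilies (d w : ℕ) : Submodule ℂ (ℝ → ℂ[X]) :=
  Submodule.span ℂ {q | ∃ m k : ℕ, k ≤ d * m + w ∧ q = fun t : ℝ => (t : ℂ) ^ m • X ^ k}

section AmplitudeFamilies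

variable {d w : ℕ} {q : ℝ → ℂ[X]}

lemma pow_smul_X_pow_mem_amplitudeFamilies {m k : ℕ} (h : k ≤ d * m + w) :
    (fun t : ℝ => (t : ℂ) ^ m • (X : ℂ[X]) ^ k) ∈ amplitudeFamilies d w :=
  Submodule.subset_span ⟨m, k, h, rfl⟩

lemma X_mem_amplitudeFamilies_one : (fun _ => X) ∈ amplitudeFamilies d 1 := by
  simpa using pow_smul_X_pow_mem_amplitudeFamilies (d := d) (w := 1) (m := 0) (k := 1) (by simp)

lemma derivative_mem_amplitudeFamilies (hq : q ∈ amplitudeFamilies d w) :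
    (fun t => derivative (q t)) ∈ amplitudeFamilies d w := by
  induction hq using Submodule.span_induction with
  | mem q hq =>
    obtain ⟨m, k, hk, rfl⟩ := hq
    convert (amplitudeFamilies d w).smul_mem (k : ℂ) <|
      pow_smul_X_pow_mem_amplitudeFamilies ((k.sub_le 1).trans hk) using 1
    ext1 t
    rw [derivative_smul, derivative_X_pow, Pi.smul_apply, smul_comm, smul_eq_C_mul (k : ℂ)]
  | zero =>
    simp only [Pi.zero_apply, map_zero]
    exact zero_mem _
  | add p q _ _ hp hq => simpa using! (amplitudeFamilies d w).add_mem hp hq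
  | smul c q _ hq => simpa using! (amplitudeFamilies d w).smul_mem c hq

lemma smul_mul_mem_amplitudeFamilies (hq : q ∈ amplitudeFamilies d w) {R : ℂ[X]}
    (hR : R.natDegree ≤ d) : (fun t : ℝ => (t : ℂ) • R * q t) ∈ amplitudeFamilies d w := by
  induction hq using Submodule.span_induction with
  | mem q hq =>
    obtain ⟨m, k, hk, rfl⟩ := hq
    have hexpand : (fun t : ℝ => (t : ℂ) • R * (t : ℂ) ^ m • (X : ℂ[X]) ^ k) =
        ∑ j ∈ Finset.range (d + 1),
          R.coeff j • fun t : ℝ => (t : ℂ) ^ (m + 1) • (X : ℂ[X]) ^ (j + k) := by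
      ext1 t
      conv_lhs => rw [R.as_sum_range_C_mul_X_pow' (Nat.lt_succ_of_le hR)]
      simp only [Finset.sum_apply, Pi.smul_apply, smul_eq_C_mul, C_pow, Finset.mul_sum,
        Finset.sum_mul]
      exact Finset.sum_congr rfl fun j _ => by ring
    rw [hexpand]
    refine Submodule.sum_mem _ fun j hj => Submodule.smul_mem _ _ ?_
    have hjd : j ≤ d := Finset.mem_range_succ_iff.1 hj
    exact pow_smul_X_pow_mem_amplitudeFamilies (by rw [mul_add]; omega)
  | zero =>
    simp only [Pi.zero_apply, mul_zero]
    exact zero_mem _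
  | add p q _ _ hp hq => simpa [mul_add] using! (amplitudeFamilies d w).add_mem hp hq
  | smul c q _ hq => simpa using! (amplitudeFamilies d w).smul_mem c hq

lemma twistedDeriv_mem_amplitudeFamilies {P : ℂ[X]} (hP : P.natDegree ≤ d)
    (hq : q ∈ amplitudeFamilies d w) :
    (fun t : ℝ => twistedDeriv ((t : ℂ) • P) (q t)) ∈ amplitudeFamilies d w := by
  have hP' : (derivative P).natDegree ≤ d :=
    (natDegree_derivative_le P).trans ((Nat.sub_le _ _).trans hP)
  simpa only [twistedDeriv_apply, derivative_smul] using!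
    add_mem (derivative_mem_amplitudeFamilies hq) (smul_mul_mem_amplitudeFamilies hq hP')

lemma iterate_twistedDeriv_mem_amplitudeFamilies {P : ℂ[X]} (hP : P.natDegree ≤ d)
    (hq : q ∈ amplitudeFamilies d w) (n : ℕ) :
    (fun t : ℝ => (twistedDeriv ((t : ℂ) • P))^[n] (q t)) ∈ amplitudeFamilies d w := by
  induction n with
  | zero => exact hq
  | succ n ih =>
    simpa only [Function.iterate_succ_apply'] using twistedDeriv_mem_amplitudeFamilies hP ih

end AmplitudeFamilies

namespace DecayBound

variable {P : ℂ[X]} {d w : ℕ} {a a' b : ℝ} {q : ℝ → ℂ[X]}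

lemma exists_pow_mul_norm_expIntegral_X_pow_le (hP : DecayBound P d a b) (ha : a < a') {m k : ℕ}
    (hk : k ≤ d * m + w) :
    ∃ A, ∀ t : ℝ, 0 < t → ∀ ω : ℝ,
      t ^ m * ‖expIntegral (oscillatingPhase P t ω) (X ^ k)‖ ≤
        A * (Real.exp (a' * t) / t ^ (((w : ℝ) + 1) / d)) := by
  have hd : (0 : ℝ) < d := Nat.cast_pos.2 hP.degree_pos
  have hr : -(((w : ℝ) + 1) / d) ≤ m + -((k : ℝ) + 1) / d := by
    have hk' : (k : ℝ) ≤ d * m + w := mod_cast hk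
    field_simp
    linarith
  obtain ⟨A, hA⟩ := exists_rpow_le_mul_exp_div_rpow (sub_pos.2 ha) hr
  have hb := hP.rate_pos
  have hΓ : 0 < Real.Gamma (((k : ℝ) + 1) / d) := Real.Gamma_pos_of_pos (by positivity)
  set B : ℝ := b ^ (-((k : ℝ) + 1) / d) * (1 / d) * Real.Gamma (((k : ℝ) + 1) / d)
  have hB : 0 ≤ B := mul_nonneg (by positivity) hΓ.le
  refine ⟨B * A, fun t ht ω => ?_⟩
  calc t ^ m * ‖expIntegral (oscillatingPhase P t ω) (X ^ k)‖
      ≤ t ^ m * (Real.exp (a * t) * ((b * t) ^ (-((k : ℝ) + 1) / d) * (1 / d) *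
          Real.Gamma (((k : ℝ) + 1) / d))) := by
        gcongr
        exact (decayBound_oscillatingPhase hP ht ω).norm_expIntegral_X_pow_le k
    _ = B * Real.exp (a * t) * t ^ ((m : ℝ) + -((k : ℝ) + 1) / d) := by
        rw [Real.rpow_add ht, Real.rpow_natCast, Real.mul_rpow hb.le ht.le]
        ring
    _ ≤ B * Real.exp (a * t) * (A * (Real.exp ((a' - a) * t) / t ^ (((w : ℝ) + 1) / d))) := by
        exact mul_le_mul_of_nonneg_left (hA t ht) (mul_nonneg hB (Real.exp_pos _).le)
    _ = B * A * (Real.exp (a' * t) / t ^ (((w : ℝ) + 1) / d)) := by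
        rw [show a' * t = a * t + (a' - a) * t by ring, Real.exp_add]
        ring

lemma exists_norm_expIntegral_le (hP : DecayBound P d a b) (ha : a < a')
    (hq : q ∈ amplitudeFamilies d w) :
    ∃ A, ∀ t : ℝ, 0 < t → ∀ ω : ℝ,
      ‖expIntegral (oscillatingPhase P t ω) (q t)‖ ≤
        A * (Real.exp (a' * t) / t ^ (((w : ℝ) + 1) / d)) := by
  induction hq using Submodule.span_induction with
  | mem q hq =>
    obtain ⟨m, k, hk, rfl⟩ := hq
    obtain ⟨A, hA⟩ := hP.exists_pow_mul_norm_expIntegral_X_pow_le ha hk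
    refine ⟨A, fun t ht ω => ?_⟩
    rw [expIntegral_smul, norm_mul, norm_pow, Complex.norm_real, Real.norm_of_nonneg ht.le]
    exact hA t ht ω
  | zero => exact ⟨0, by simp [expIntegral]⟩
  | add p q _ _ hp hq =>
    obtain ⟨A, hA⟩ := hp
    obtain ⟨B, hB⟩ := hq
    refine ⟨A + B, fun t ht ω => ?_⟩
    rw [Pi.add_apply, (decayBound_oscillatingPhase hP ht ω).expIntegral_add, add_mul]
    exact norm_add_le_of_le (hA t ht ω) (hB t ht ω)
  | smul c q _ hq =>
    obtain ⟨A, hA⟩ := hq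
    refine ⟨‖c‖ * A, fun t ht ω => ?_⟩
    rw [Pi.smul_apply, expIntegral_smul, norm_mul, mul_assoc]
    gcongr
    exact hA t ht ω

lemma exists_norm_expIntegral_X_le (hP : DecayBound P d a b) (ha : a < a') :
    ∃ A, ∀ t : ℝ, 0 < t → ∀ ω : ℝ,
      ‖expIntegral (oscillatingPhase P t ω) X‖ ≤
        A * (Real.exp (a' * t) / t ^ ((2 : ℝ) / d)) := by
  have h := hP.exists_norm_expIntegral_le ha X_mem_amplitudeFamilies_one
  rwa [Nat.cast_one, one_add_one_eq_two] at h

lemma exists_norm_cube_mul_expIntegral_X_add_le (hP : DecayBound P d a b) (ha : a < a')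
    (hdeg : P.natDegree ≤ d) (hP0 : P.eval 0 = 0) :
    ∃ A, ∀ t : ℝ, 0 < t → ∀ ω : ℝ,
      ‖(ω : ℂ) ^ 3 * expIntegral (oscillatingPhase P t ω) X + ω‖ ≤
        A * (Real.exp (a' * t) / t ^ ((2 : ℝ) / d)) := by
  obtain ⟨A, hA⟩ := hP.exists_norm_expIntegral_le ha
    (iterate_twistedDeriv_mem_amplitudeFamilies hdeg X_mem_amplitudeFamilies_one 3)
  have ha₀ : 0 ≤ a := by simpa [hP0, hP.degree_pos.ne'] using hP.re_eval_le 0 le_rfl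
  obtain ⟨B, hB⟩ := exists_rpow_le_mul_exp_div_rpow (r := 1) (s := 2 / d) (ha₀.trans_lt ha)
    (by linarith [show (0 : ℝ) ≤ 2 / d by positivity])
  refine ⟨‖2 * (derivative P).eval 0‖ * B + A, fun t ht ω => ?_⟩
  set E := expIntegral (oscillatingPhase P t ω)
  have hparts : (Complex.I * ω) ^ 3 * E X - Complex.I * ω =
      -(2 * (derivative ((t : ℂ) • P)).eval 0 + E ((twistedDeriv ((t : ℂ) • P))^[3] X)) :=
    cube_mul_expIntegral_X (decayBound_oscillatingPhase hP ht ω) (by simp [hP0])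
  have hboundary : ‖2 * (derivative ((t : ℂ) • P)).eval 0‖ = ‖2 * (derivative P).eval 0‖ * t := by
    rw [derivative_smul, eval_smul, smul_eq_mul, mul_left_comm, norm_mul, Complex.norm_real,
      Real.norm_of_nonneg ht.le, mul_comm]
  have hrotate :
      (ω : ℂ) ^ 3 * E X + ω = Complex.I * ((Complex.I * ω) ^ 3 * E X - Complex.I * ω) := by
    linear_combination (-(ω : ℂ) ^ 3 * E X * (Complex.I ^ 2 - 1) + ω) * Complex.I_sq
  rw [hrotate, hparts, norm_mul, Complex.norm_I, one_mul, norm_neg, add_mul, mul_assoc]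
  refine norm_add_le_of_le ?_ ?_
  · rw [hboundary]
    gcongr
    simpa only [Real.rpow_one] using hB t ht
  · convert hA t ht ω using 4
    norm_num

end DecayBound

section OST

variable {η t : ℝ}

/-- The polynomial `P(ξ) = (i - η)ξ³ + ηξ` for which the OST symbol is `e^{tP(ξ)}` on `ξ > 0`. -/
noncomputable def ostPhase (η : ℝ) : ℂ[X] :=
  C (Complex.I - η) * X ^ 3 + C (η : ℂ) * X

lemma natDegree_ostPhase_le (η : ℝ) : (ostPhase η).natDegree ≤ 3 := by
  unfold ostPhase
  compute_degree

lemma eval_zero_ostPhase (η : ℝ) : (ostPhase η).eval 0 = 0 := by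
  simp [ostPhase]

lemma decayBound_ostPhase (hη : 0 < η) : DecayBound (ostPhase η) 3 η (η / 2) where
  degree_pos := by norm_num
  rate_pos := by positivity
  re_eval_le ξ hξ := by
    have hre : ((ostPhase η).eval (ξ : ℂ)).re = η * (ξ - ξ ^ 3) := by
      have hre_cube : ((Complex.I - η) * (ξ : ℂ) ^ 3).re = -(η * ξ ^ 3) := by
        simp [← Complex.ofReal_pow]
      simp only [ostPhase, eval_add, eval_mul, eval_C, eval_pow, eval_X, Complex.add_re, hre_cube,
        Complex.re_ofReal_mul, Complex.ofReal_re]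
      ring
    have hcube : ξ ≤ 1 + ξ ^ 3 / 2 := by
      nlinarith [mul_nonneg hξ (sq_nonneg (ξ - 1)), sq_nonneg (ξ - 1)]
    rw [hre]
    nlinarith

lemma ostSymbol_eq_cexp_eval_ostPhase {ξ : ℝ} (hξ : 0 < ξ) :
    ostSymbol η t ξ = Complex.exp (((t : ℂ) • ostPhase η).eval (ξ : ℂ)) := by
  rw [ostSymbol, ostPhase, abs_of_pos hξ]
  congr 1
  simp only [eval_smul, eval_add, eval_mul, eval_C, eval_pow, eval_X, smul_eq_mul]
  push_cast
  ring

lemma ostSymbol_neg (η t ξ : ℝ) : ostSymbol η t (-ξ) = conj (ostSymbol η t ξ) := by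
  rw [ostSymbol, ostSymbol, ← Complex.exp_conj, abs_neg]
  simp only [map_mul, map_sub, Complex.conj_I, Complex.conj_ofReal]
  push_cast
  ring_nf

lemma ostKernel_eq_fourierInv (η t : ℝ) : ostKernel η t = 𝓕⁻ (ostSymbol η t) := by
  ext x
  rw [Real.fourierInv_eq', ostKernel]
  congr! 3 with ξ
  simp only [RCLike.inner_apply, Real.ringHom_apply]
  push_cast
  ring_nf

lemma exp_mul_ostSymbol {ξ : ℝ} (hξ : 0 < ξ) (η t x : ℝ) :
    Complex.exp ((2 * Real.pi * x * ξ : ℝ) * Complex.I) * ostSymbol η t ξ =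
      Complex.exp ((oscillatingPhase (ostPhase η) t (2 * Real.pi * x)).eval (ξ : ℂ)) := by
  rw [oscillatingPhase, ostSymbol_eq_cexp_eval_ostPhase hξ, ← Complex.exp_add, eval_add,
    eval_C_mul, eval_X]
  push_cast
  ring_nf

lemma integrableOn_pow_mul_ostSymbol (hη : 0 < η) (ht : 0 < t) (k : ℕ) :
    IntegrableOn (fun ξ : ℝ => (ξ : ℂ) ^ k * ostSymbol η t ξ) (Ioi 0) := by
  have h := (decayBound_oscillatingPhase (decayBound_ostPhase hη) ht 0).integrableOn (X ^ k)
  refine h.congr_fun (fun ξ hξ => ?_) measurableSet_Ioi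
  simp [oscillatingPhase, ostSymbol_eq_cexp_eval_ostPhase hξ]

lemma hasDerivAt_ostKernel (hη : 0 < η) (ht : 0 < t) (x : ℝ) :
    HasDerivAt (ostKernel η t) ((-(4 * Real.pi) *
      (expIntegral (oscillatingPhase (ostPhase η) t (2 * Real.pi * x)) X).im : ℝ) : ℂ) x := by
  have hint := integrableOn_pow_mul_ostSymbol hη ht
  rw [ostKernel_eq_fourierInv]
  convert hasDerivAt_fourierInv_of_apply_neg_eq_conj (by simpa using hint 0)
    (by simpa using hint 1) (ostSymbol_neg η t) x using 4
  refine setIntegral_congr_fun measurableSet_Ioi fun ξ hξ => ?_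
  simp only [eval_X, exp_mul_ostSymbol hξ]

lemma norm_deriv_ostKernel_mul_le (hη : 0 < η) (ht : 0 < t) {x ω : ℝ} (hω : ω = 2 * Real.pi * x) :
    ‖deriv (ostKernel η t) x‖ * (1 + |x| ^ 3) ≤
      4 * Real.pi * (‖expIntegral (oscillatingPhase (ostPhase η) t ω) X‖ +
        ‖(ω : ℂ) ^ 3 * expIntegral (oscillatingPhase (ostPhase η) t ω) X + ω‖) := by
  rw [(hasDerivAt_ostKernel hη ht x).deriv, ← hω]
  set J := expIntegral (oscillatingPhase (ostPhase η) t ω) X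
  have hxω : |x| ≤ |ω| := by
    rw [hω, abs_mul, abs_of_pos Real.two_pi_pos]
    nlinarith [Real.pi_gt_three, abs_nonneg x]
  have him : ((ω : ℂ) ^ 3 * J + ω).im = ω ^ 3 * J.im := by
    simp [← Complex.ofReal_pow]
  calc ‖((-(4 * Real.pi) * J.im : ℝ) : ℂ)‖ * (1 + |x| ^ 3)
      = 4 * Real.pi * (|J.im| + |x| ^ 3 * |J.im|) := by
        rw [Complex.norm_real, Real.norm_eq_abs, abs_mul, abs_neg, abs_of_pos (by positivity)]
        ring
    _ ≤ 4 * Real.pi * (|J.im| + |ω| ^ 3 * |J.im|) := by gcongr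
    _ = 4 * Real.pi * (|J.im| + |((ω : ℂ) ^ 3 * J + ω).im|) := by rw [him, abs_mul, abs_pow]
    _ ≤ 4 * Real.pi * (‖J‖ + ‖(ω : ℂ) ^ 3 * J + ω‖) := by
        gcongr <;> exact Complex.abs_im_le_norm _

end OST

theorem stmt13 : ∀ η : ℝ, 0 < η → ∃ C > (0:ℝ), ∀ t : ℝ, 0 < t →
    ∀ x : ℝ, ‖deriv (fun x : ℝ => ostKernel η t x) x‖ ≤
      C * (Real.exp (6 * η * t) / t ^ ((2:ℝ)/3)) * (1 / (1 + |x| ^ 3)) := by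
  intro η hη
  have hP := decayBound_ostPhase hη
  have hη6 : η < 6 * η := by linarith
  obtain ⟨A, hA⟩ := hP.exists_norm_expIntegral_X_le hη6
  obtain ⟨B, hB⟩ := hP.exists_norm_cube_mul_expIntegral_X_add_le hη6 (natDegree_ostPhase_le η)
    (eval_zero_ostPhase η)
  refine ⟨max 1 (4 * Real.pi * (A + B)), by positivity, fun t ht x => ?_⟩
  rw [mul_one_div, le_div_iff₀ (by positivity)]
  set D := Real.exp (6 * η * t) / t ^ ((2 : ℝ) / 3)
  calc ‖deriv (ostKernel η t) x‖ * (1 + |x| ^ 3)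
      ≤ 4 * Real.pi * (A * D + B * D) := by
        refine (norm_deriv_ostKernel_mul_le hη ht rfl).trans ?_
        gcongr
        exacts [hA t ht _, hB t ht _]
    _ = 4 * Real.pi * (A + B) * D := by ring
    _ ≤ max 1 (4 * Real.pi * (A + B)) * D := by
        gcongr
        exact le_max_right _ _
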